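/- Suppose f, g : ℝ^N → [−∞, ∞] are Borel measurable, g ≥ 0, f is not identically ∞ and g is not identically ∞. Let f_+ := max{f, 0}, so 0 ≤ m_{f_+} + m_g < ∞, and set m := m_{f_+,g} = (m_{f_+} − m_g)/2. Then f_+ − m, g + m and f⊻g are nonnegative, f⊻g is Lebesgue measurable, and for every Young function φ: ‖(f_+ − m)⁻¹‖_φ + ‖(g + m)⁻¹‖_φ ≤ 4 ‖(f⊻g)⁻¹‖_φ. -/

import Mathlib

open MeasureTheory Filter Set
open scoped ENNReal NNReal Pointwise

noncomputable section

/-- `ℝ^N` with the Euclidean structure and Lebesgue measure. -/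
abbrev ES (N : ℕ) := EuclideanSpace ℝ (Fin N)

variable {N : ℕ}

/-- The operation `(f ⊼ g)(x) = sup_y min (f (x - y)) (g y)` for extended-real valued
functions. -/
def supMinE (f g : ES N → EReal) (x : ES N) : EReal := ⨆ y, min (f (x - y)) (g y)

/-- The operation `(f ⊻ g)(x) = inf_y max (f (x - y)) (g y)` for extended-real valued
functions. -/
def infMaxE (f g : ES N → EReal) (x : ES N) : EReal := ⨅ y, max (f (x - y)) (g y)

/-- The infimal convolution `(f □ g)(x) = inf_y (f (x - y) + g y)`. -/
def infConvE (f g : ES N → EReal) (x : ES N) : EReal := ⨅ y, (f (x - y) + g y)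

/-- The operation `(f ⊼ g)(x) = sup_y min (f (x - y)) (g y)` for `[0,∞]`-valued functions. -/
def supMin (f g : ES N → ℝ≥0∞) (x : ES N) : ℝ≥0∞ := ⨆ y, min (f (x - y)) (g y)

/-- A Young function: a nonconstant, nondecreasing, convex, left-continuous
`φ : [0,∞] → [0,∞]` with `φ 0 = 0`. -/
structure IsYoungFunction (φ : ℝ≥0∞ → ℝ≥0∞) : Prop where
  nonconstant : ∃ x y, φ x ≠ φ y
  map_zero : φ 0 = 0
  mono : Monotone φ
  convex : ∀ ⦃a b x y : ℝ≥0∞⦄, a + b = 1 → φ (a * x + b * y) ≤ a * φ x + b * φ y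
  left_continuous : ∀ x, ContinuousWithinAt φ (Set.Iio x) x

/-- The Luxemburg norm `‖h‖_φ = inf {r > 0 | ∫ φ (r⁻¹ |h|) ≤ 1}` (`= ∞` if no such `r`),
for a nonnegative function `h`. -/
def luxNorm (φ : ℝ≥0∞ → ℝ≥0∞) (h : ES N → ℝ≥0∞) : ℝ≥0∞ :=
  sInf {r : ℝ≥0∞ | 0 < r ∧ ∫⁻ x, φ (r⁻¹ * h x) ≤ 1}

/-- The nonnegative part of an extended real, as an element of `[0,∞]`. -/
def toENN (a : EReal) : ℝ≥0∞ := if a = ⊤ then ⊤ else ENNReal.ofReal a.toReal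

/-- The reciprocal `1/a ∈ [0,∞]` of an extended real (intended for `a ≥ 0`), with the
conventions `1/0 = ∞` and `1/∞ = 0`. -/
def eInv (a : EReal) : ℝ≥0∞ := (toENN a)⁻¹

/-- The enclosing radius of a set `X ⊆ ℝ^N`: the infimum of the radii of closed balls
containing `X` (`0` for `X = ∅`, `∞` if `X` is unbounded). -/
def encRadius (X : Set (ES N)) : ℝ≥0∞ := sInf {r : ℝ≥0∞ | ∃ c : ES N, ∀ x ∈ X, edist x c ≤ r}

/-- The transform `f̂(x) = γ_f^+(|x|)` where `γ_f^+(t) = inf {ξ | ρ_f^+(ξ) ≤ t}` and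
`ρ_f^+(ξ)` is the enclosing radius of the upper level set `{f > ξ}`. -/
def hatE (f : ES N → EReal) (x : ES N) : EReal :=
  sInf {ξ : EReal | encRadius {y | ξ < f y} ≤ (‖x‖₊ : ℝ≥0∞)}

/-- The lower transform `f̌ = -((-f)^)`. -/
def checkE (f : ES N → EReal) (x : ES N) : EReal := - hatE (fun y => - f y) x

/-- The transform `f̂` for `[0,∞]`-valued functions. -/
def hatT (f : ES N → ℝ≥0∞) (x : ES N) : ℝ≥0∞ :=
  sInf {ξ : ℝ≥0∞ | encRadius {y | ξ < f y} ≤ (‖x‖₊ : ℝ≥0∞)}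

/-- The lower transform `f̌(x) = γ_f^-(|x|)`, `γ_f^-(t) = sup {ξ | ρ({f < ξ}) ≤ t}`,
for `[0,∞]`-valued functions. -/
def checkT (f : ES N → ℝ≥0∞) (x : ES N) : ℝ≥0∞ :=
  sSup {ξ : ℝ≥0∞ | encRadius {y | f y < ξ} ≤ (‖x‖₊ : ℝ≥0∞)}

/-- The `L^p` "norm" (`p ∈ [1,∞]`, essential supremum when `p = ∞`) of a `[0,∞]`-valued
function. -/
def pNorm (p : ℝ≥0∞) (h : ES N → ℝ≥0∞) : ℝ≥0∞ :=
  if p = ∞ then essSup h volume else (∫⁻ x, h x ^ p.toReal) ^ (1 / p.toReal)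

/-!
For every `t`, the sublevel set `{f ⊻ g < t}` is the Minkowski sum `{f < t} + {g < t}`. A sum of
Borel sets is analytic, hence Lebesgue measurable by capacitability: a continuous image of the
Baire space is exhausted in measure by its compact subsets.

If `{f₊ - m < t}` is nonempty, then `t` exceeds the average `(a + b) / 2` of the infima of `f₊` and
`g`. Hence `{g < 2t}` is nonempty and `{f₊ - m < t} ⊆ {f₊ < 2t}`, so a translate of `{f₊ - m < t}`
lies in `{f₊ ⊻ g < 2t}`. Thus the superlevel sets of `(f₊ - m)⁻¹` have at most the measure of those
of `2 (f₊ ⊻ g)⁻¹`. As the strict superlevel sets of a nondecreasing left-continuous `φ` are open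
upper half-lines (or everything), this comparison passes to Luxemburg norms by the layer-cake
formula. Exchanging `f₊` and `g` changes the sign of `m`, and adding the two bounds yields the
factor `4`.
-/

theorem exists_cylinder_subset_of_isCompact {E : ℕ → Type*} [∀ n, TopologicalSpace (E n)]
    [∀ n, DiscreteTopology (E n)] {K V : Set (∀ n, E n)} (hK : IsCompact K) (hV : IsOpen V)
    (hKV : K ⊆ V) : ∃ m, ∀ y ∈ K, PiNat.cylinder y m ⊆ V := by
  let _ := PiNat.metricSpace (E := E)
  obtain ⟨δ, hδ, hKδ⟩ := hK.exists_thickening_subset_open hV hKV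
  obtain ⟨m, hm⟩ := exists_pow_lt_of_lt_one hδ one_half_lt_one
  exact ⟨m, fun y hy x hx => hKδ <|
    Metric.mem_thickening_iff.2 ⟨y, hy, (PiNat.mem_cylinder_iff_dist_le.1 hx).trans_lt hm⟩⟩

theorem isCompact_Iic_of_orderBot {α : Type*} [TopologicalSpace α] [Preorder α] [OrderBot α]
    [CompactIccSpace α] (a : α) : IsCompact (Iic a) :=
  Icc_bot (a := a) ▸ isCompact_Icc

theorem exists_forall_lt_le_subset_of_Iic_subset {n : ℕ → ℕ} {V : Set (ℕ → ℕ)} (hV : IsOpen V)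
    (hnV : Iic n ⊆ V) : ∃ k, {x : ℕ → ℕ | ∀ i < k, x i ≤ n i} ⊆ V := by
  obtain ⟨k, hk⟩ := exists_cylinder_subset_of_isCompact (isCompact_Iic_of_orderBot n) hV hnV
  exact ⟨k, fun x hx =>
    hk (x ⊓ n) (mem_Iic.2 inf_le_right) fun i hi => (inf_eq_left.2 (hx i hi)).symm⟩

/-- The bounds `n k` are chosen one coordinate at a time: bounding coordinate `k` by `j` exhausts
the image as `j → ∞`, and measures are continuous along increasing unions of arbitrary sets. -/
theorem exists_forall_lt_measure_image_forall_lt_le {α : Type*} [MeasurableSpace α]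
    {μ : Measure α} {F : (ℕ → ℕ) → α} {c : ℝ≥0∞} (hc : c < μ (range F)) :
    ∃ n : ℕ → ℕ, ∀ k, c < μ (F '' {x | ∀ i < k, x i ≤ n i}) := by
  have exists_bound : ∀ (k : ℕ) (S : Set (ℕ → ℕ)), c < μ (F '' S) →
      ∃ j, c < μ (F '' (S ∩ {x | x k ≤ j})) := by
    intro k S hS
    have hmono : Monotone fun j : ℕ => F '' (S ∩ {x | x k ≤ j}) := fun i j hij =>
      image_mono (inter_subset_inter_right _ fun x (hx : x k ≤ i) => hx.trans hij)
    have hunion : ⋃ j : ℕ, F '' (S ∩ {x | x k ≤ j}) = F '' S := by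
      rw [← image_iUnion, ← inter_iUnion,
        iUnion_eq_univ_iff.2 fun x => ⟨x k, le_refl (x k)⟩, inter_univ]
    rwa [← hunion, hmono.measure_iUnion, lt_iSup_iff] at hS
  choose! j hj using exists_bound
  let S : ℕ → Set (ℕ → ℕ) := Nat.rec univ fun k T => T ∩ {x | x k ≤ j k T}
  have hcS (k : ℕ) : c < μ (F '' S k) := by
    induction k with
    | zero => simpa [S] using hc
    | succ k ih => exact hj k (S k) ih
  have hS (k : ℕ) : S k ⊆ {x | ∀ i < k, x i ≤ j i (S i)} := by
    induction k with
    | zero => simp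
    | succ k ih => exact fun x hx => Nat.forall_lt_succ_right.2 ⟨ih hx.1, hx.2⟩
  exact ⟨fun k => j k (S k), fun k => (hcS k).trans_le (measure_mono (image_mono (hS k)))⟩

theorem exists_isCompact_subset_range_le_measure {α : Type*} [TopologicalSpace α]
    [MeasurableSpace α] {μ : Measure α} [μ.OuterRegular] {F : (ℕ → ℕ) → α} (hF : Continuous F)
    {c : ℝ≥0∞} (hc : c < μ (range F)) : ∃ K ⊆ range F, IsCompact K ∧ c ≤ μ K := by
  obtain ⟨n, hn⟩ := exists_forall_lt_measure_image_forall_lt_le hc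
  refine ⟨F '' Iic n, image_subset_range _ _, (isCompact_Iic_of_orderBot n).image hF,
    le_of_forall_gt fun r hr => ?_⟩
  obtain ⟨U, hKU, hU, hUr⟩ := Set.exists_isOpen_lt_of_lt _ r hr
  obtain ⟨k, hk⟩ := exists_forall_lt_le_subset_of_Iic_subset (hU.preimage hF)
    (image_subset_iff.1 hKU)
  exact ((hn k).trans_le (measure_mono (image_subset_iff.2 hk))).trans hUr

theorem nullMeasurableSet_of_analyticSet {α : Type*} [TopologicalSpace α]
    [TopologicalSpace.MetrizableSpace α] [MeasurableSpace α] [BorelSpace α] {μ : Measure α}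
    [SFinite μ] {s : Set α} (hs : AnalyticSet s) : NullMeasurableSet s μ := by
  let ν := μ.toFinite
  suffices NullMeasurableSet s ν from this.mono_ac (absolutelyContinuous_toFinite μ)
  rw [AnalyticSet] at hs
  obtain rfl | ⟨F, hF, rfl⟩ := hs
  · exact nullMeasurableSet_empty
  obtain hzero | hpos := eq_zero_or_pos (ν (range F))
  · exact .of_null hzero
  obtain ⟨c, -, hc, hlim⟩ := exists_seq_strictMono_tendsto' hpos
  choose K hKF hK hcK using fun i => exists_isCompact_subset_range_le_measure hF (hc i).2
  have hmeas : MeasurableSet (⋃ i, K i) := .iUnion fun i => (hK i).measurableSet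
  have hle : ν (range F) ≤ ν (⋃ i, K i) :=
    le_of_tendsto' hlim fun i => (hcK i).trans (measure_mono (subset_iUnion K i))
  exact hmeas.nullMeasurableSet.congr <|
    ae_eq_of_subset_of_measure_ge (iUnion_subset hKF) hle hmeas.nullMeasurableSet
      (measure_ne_top ν _)

theorem nullMeasurableSet_add {G : Type*} [Add G] [TopologicalSpace G] [PolishSpace G]
    [MeasurableSpace G] [BorelSpace G] [MeasurableAdd₂ G] {μ : Measure G} [SFinite μ]
    {s t : Set G} (hs : MeasurableSet s) (ht : MeasurableSet t) :
    NullMeasurableSet (s + t) μ := by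
  rw [← add_image_prod]
  exact nullMeasurableSet_of_analyticSet ((hs.prod ht).analyticSet_image measurable_add)

theorem lintegral_eq_lintegral_measure_ofReal_lt {α : Type*} [MeasurableSpace α] {μ : Measure α}
    {u : α → ℝ≥0∞} (hu : AEMeasurable u μ) :
    ∫⁻ x, u x ∂μ = ∫⁻ t in Ioi (0 : ℝ), μ {x | ENNReal.ofReal t < u x} := by
  by_cases hfin : ∀ᵐ x ∂μ, u x ≠ ∞
  · calc ∫⁻ x, u x ∂μ = ∫⁻ x, ENNReal.ofReal (u x).toReal ∂μ :=
          lintegral_congr_ae (hfin.mono fun x hx => (ENNReal.ofReal_toReal hx).symm)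
      _ = ∫⁻ t in Ioi (0 : ℝ), μ {x | t < (u x).toReal} :=
          lintegral_eq_lintegral_meas_lt μ (ae_of_all _ fun x => ENNReal.toReal_nonneg)
            hu.ennreal_toReal
      _ = ∫⁻ t in Ioi (0 : ℝ), μ {x | ENNReal.ofReal t < u x} :=
          setLIntegral_congr_fun measurableSet_Ioi fun t ht => measure_congr <|
            hfin.mono fun x hx => propext (ENNReal.ofReal_lt_iff_lt_toReal (le_of_lt ht) hx).symm
  · have htop : μ {x | u x = ∞} ≠ 0 := fun h => hfin (measure_eq_zero_iff_ae_notMem.1 h)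
    rw [lintegral_eq_top_of_measure_eq_top_ne_zero hu htop, eq_comm, eq_top_iff]
    calc ∞ = ∫⁻ _ in Ioi (0 : ℝ), μ {x | u x = ∞} := by simp [ENNReal.mul_top, htop]
      _ ≤ ∫⁻ t in Ioi (0 : ℝ), μ {x | ENNReal.ofReal t < u x} :=
          lintegral_mono fun t => measure_mono fun x (hx : u x = ∞) => by simp [hx]

theorem lintegral_le_of_measure_lt_le {α : Type*} [MeasurableSpace α] {μ : Measure α}
    {u w : α → ℝ≥0∞} (hu : AEMeasurable u μ) (hw : AEMeasurable w μ)
    (h : ∀ s, μ {x | s < u x} ≤ μ {x | s < w x}) : ∫⁻ x, u x ∂μ ≤ ∫⁻ x, w x ∂μ := by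
  rw [lintegral_eq_lintegral_measure_ofReal_lt hu, lintegral_eq_lintegral_measure_ofReal_lt hw]
  exact lintegral_mono fun t => h (ENNReal.ofReal t)

theorem map_sSup_le_of_forall_mem_le {α β : Type*} [CompleteLinearOrder α] [TopologicalSpace α]
    [OrderTopology α] [LinearOrder β] [TopologicalSpace β] [ClosedIicTopology β] {φ : α → β}
    {A : Set α} (hφ : ContinuousWithinAt φ (Iio (sSup A)) (sSup A)) (hA : A.Nonempty) {s : β}
    (hs : ∀ z ∈ A, φ z ≤ s) : φ (sSup A) ≤ s := by
  by_cases hmem : sSup A ∈ A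
  · exact hs _ hmem
  · have hsub : A ⊆ Iio (sSup A) := fun z hz =>
      (le_sSup hz).lt_of_ne fun heq => hmem (heq ▸ hz)
    have := (isLUB_sSup A).nhdsWithin_neBot hA
    exact le_of_tendsto (hφ.mono hsub) (eventually_mem_nhdsWithin.mono hs)

theorem forall_lt_or_exists_forall_lt_iff {α β : Type*} [CompleteLinearOrder α]
    [TopologicalSpace α] [OrderTopology α] [LinearOrder β] [TopologicalSpace β]
    [ClosedIicTopology β] {φ : α → β} (hmono : Monotone φ)
    (hleft : ∀ x, ContinuousWithinAt φ (Iio x) x) (s : β) :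
    (∀ z, s < φ z) ∨ ∃ c, ∀ z, s < φ z ↔ c < z := by
  by_cases hne : {z | φ z ≤ s}.Nonempty
  · refine .inr ⟨sSup {z | φ z ≤ s}, fun z => lt_iff_lt_of_le_iff_le ⟨fun hz => ?_, fun hz => ?_⟩⟩
    · exact le_sSup hz
    · exact (hmono hz).trans (map_sSup_le_of_forall_mem_le (hleft _) hne fun _ => id)
  · exact .inl fun z => not_le.1 fun hz => hne ⟨z, hz⟩

theorem lintegral_comp_le_of_measure_lt_le {α : Type*} [MeasurableSpace α] {μ : Measure α}
    {φ : ℝ≥0∞ → ℝ≥0∞} (hmono : Monotone φ) (hleft : ∀ x, ContinuousWithinAt φ (Iio x) x)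
    {u w : α → ℝ≥0∞} (hu : AEMeasurable u μ) (hw : AEMeasurable w μ)
    (h : ∀ s, μ {x | s < u x} ≤ μ {x | s < w x}) :
    ∫⁻ x, φ (u x) ∂μ ≤ ∫⁻ x, φ (w x) ∂μ := by
  refine lintegral_le_of_measure_lt_le (hmono.measurable.comp_aemeasurable hu)
    (hmono.measurable.comp_aemeasurable hw) fun s => ?_
  obtain hs | ⟨c, hc⟩ := forall_lt_or_exists_forall_lt_iff hmono hleft s
  · simp [hs]
  · simpa only [Function.comp_apply, hc] using h c

theorem luxNorm_le_of_volume_lt_le {φ : ℝ≥0∞ → ℝ≥0∞} (hmono : Monotone φ)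
    (hleft : ∀ x, ContinuousWithinAt φ (Iio x) x) {u w : ES N → ℝ≥0∞} (hu : AEMeasurable u)
    (hw : AEMeasurable w) (h : ∀ s, volume {x | s < u x} ≤ volume {x | s < w x}) :
    luxNorm φ u ≤ luxNorm φ w := by
  refine sInf_le_sInf fun r ⟨hr, hint⟩ => ⟨hr, le_trans ?_ hint⟩
  refine lintegral_comp_le_of_measure_lt_le hmono hleft (hu.const_mul _) (hw.const_mul _)
    fun s => ?_
  obtain rfl | hr_top := eq_or_ne r ∞
  · simp
  · simpa only [← ENNReal.div_eq_inv_mul, ENNReal.lt_div_iff_mul_lt (.inl hr.ne') (.inl hr_top)]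
      using h (s * r)

theorem luxNorm_const_mul_le (φ : ℝ≥0∞ → ℝ≥0∞) (h : ES N → ℝ≥0∞) {c : ℝ≥0∞} (hc : c ≠ 0)
    (hc_top : c ≠ ∞) : luxNorm φ (fun x => c * h x) ≤ c * luxNorm φ h := by
  rw [luxNorm, luxNorm, sInf_eq_iInf' {r | 0 < r ∧ ∫⁻ x, φ (r⁻¹ * h x) ≤ 1},
    ENNReal.mul_iInf_of_ne hc hc_top]
  refine le_iInf fun ⟨r, hr, hint⟩ => sInf_le ⟨ENNReal.mul_pos hc hr.ne', ?_⟩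
  simpa only [ENNReal.mul_inv (.inl hc) (.inl hc_top), mul_mul_mul_comm,
    ENNReal.inv_mul_cancel hc hc_top, one_mul] using hint

theorem lt_eInv_iff {e : EReal} (he : 0 ≤ e) {s : ℝ≥0∞} :
    s < eInv e ↔ e < (s⁻¹ : ℝ≥0∞) := by
  rw [show eInv e = e.toENNReal⁻¹ from rfl, ENNReal.lt_inv_iff_lt_inv,
    ← EReal.coe_ennreal_lt_coe_ennreal_iff, EReal.coe_toENNReal he]

theorem lt_two_mul_eInv_iff {e : EReal} (he : 0 ≤ e) {s : ℝ≥0∞} :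
    s < 2 * eInv e ↔ e < (s⁻¹ : ℝ≥0∞) + (s⁻¹ : ℝ≥0∞) := by
  rw [mul_comm, ← ENNReal.div_lt_iff (by simp) (by simp), lt_eInv_iff he,
    ENNReal.inv_div (by simp) (by simp), div_eq_mul_inv, two_mul, EReal.coe_ennreal_add]

theorem measurable_eInv : Measurable eInv :=
  measurable_ereal_toENNReal.inv

section InfMax

variable {F G : ES N → EReal}

theorem infMaxE_preimage_Iio (F G : ES N → EReal) (t : EReal) :
    infMaxE F G ⁻¹' Iio t = F ⁻¹' Iio t + G ⁻¹' Iio t := by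
  ext x
  simp only [infMaxE, mem_preimage, mem_Iio, iInf_lt_iff, max_lt_iff, Set.mem_add]
  constructor
  · rintro ⟨y, hF, hG⟩
    exact ⟨x - y, hF, y, hG, sub_add_cancel x y⟩
  · rintro ⟨z, hF, y, hG, rfl⟩
    exact ⟨y, by rwa [add_sub_cancel_right], hG⟩

theorem infMaxE_comm (F G : ES N → EReal) : infMaxE F G = infMaxE G F :=
  funext fun x => (Equiv.subLeft x).iInf_congr fun y => by simp [max_comm]

theorem infMaxE_max_zero_left (F : ES N → EReal) (hG : ∀ x, 0 ≤ G x) :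
    infMaxE (fun x => max (F x) 0) G = infMaxE F G := by
  funext x
  simp only [infMaxE, max_assoc, max_eq_right (hG _)]

theorem infMaxE_nonneg (F : ES N → EReal) (hG : ∀ x, 0 ≤ G x) (x : ES N) : 0 ≤ infMaxE F G x :=
  le_iInf fun y => le_max_of_le_right (hG y)

theorem aemeasurable_infMaxE (hF : Measurable F) (hG : Measurable G) :
    AEMeasurable (infMaxE F G) := by
  have hlt (t : EReal) : NullMeasurableSet (infMaxE F G ⁻¹' Iio t) volume := by
    rw [infMaxE_preimage_Iio]
    exact nullMeasurableSet_add (hF measurableSet_Iio) (hG measurableSet_Iio)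
  have hnull : NullMeasurable (infMaxE F G) (volume : Measure (ES N)) :=
    measurable_of_Iio (δ := NullMeasurableSpace (ES N) volume) hlt
  exact hnull.aemeasurable

theorem volume_lt_le_volume_infMaxE_lt (F : ES N → EReal) {t : EReal} (ht : ⨅ x, G x < t) :
    volume {x | F x < t} ≤ volume {x | infMaxE F G x < t} := by
  obtain ⟨y, hy⟩ := iInf_lt_iff.1 ht
  have hsub : F ⁻¹' Iio t ⊆ (· + y) ⁻¹' (infMaxE F G ⁻¹' Iio t) := fun x hx => by
    rw [infMaxE_preimage_Iio]
    exact add_mem_add hx hy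
  exact (measure_mono hsub).trans_eq (measure_preimage_add_right volume y _)

theorem half_add_le_sub {a : ℝ} (b : ℝ) {e : EReal} (h : a ≤ e) :
    (((a + b) / 2 : ℝ) : EReal) ≤ e - (((a - b) / 2 : ℝ) : EReal) :=
  calc (((a + b) / 2 : ℝ) : EReal) = a - (((a - b) / 2 : ℝ) : EReal) := by
        rw [← EReal.coe_sub]; congr 1; ring
    _ ≤ e - (((a - b) / 2 : ℝ) : EReal) := EReal.sub_le_sub h le_rfl

theorem volume_sub_lt_le_volume_infMaxE_lt {a b : ℝ} (ha0 : 0 ≤ a) (hb0 : 0 ≤ b)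
    (ha : ∀ x, a ≤ F x) (hb : ⨅ x, G x ≤ b) (t : EReal) :
    volume {x | F x - (((a - b) / 2 : ℝ) : EReal) < t} ≤ volume {x | infMaxE F G x < t + t} := by
  obtain hempty | ⟨x₀, hx₀⟩ := {x | F x - (((a - b) / 2 : ℝ) : EReal) < t}.eq_empty_or_nonempty
  · simp [hempty]
  have ht : (((a + b) / 2 : ℝ) : EReal) < t := (half_add_le_sub b (ha x₀)).trans_lt hx₀
  have hGt : ⨅ x, G x < t + t :=
    calc ⨅ x, G x ≤ b := hb
      _ ≤ (((a + b) / 2 + (a + b) / 2 : ℝ) : EReal) := EReal.coe_le_coe (by linarith)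
      _ < t + t := EReal.coe_add _ _ ▸ EReal.add_lt_add ht ht
  have hFt (x : ES N) (hx : F x - (((a - b) / 2 : ℝ) : EReal) < t) : F x < t + t :=
    calc F x < t + (((a - b) / 2 : ℝ) : EReal) := (EReal.sub_lt_iff (by simp) (by simp)).1 hx
      _ ≤ t + (((a + b) / 2 : ℝ) : EReal) := add_le_add_right (EReal.coe_le_coe (by linarith)) t
      _ ≤ t + t := add_le_add_right ht.le t
  exact (measure_mono hFt).trans (volume_lt_le_volume_infMaxE_lt F hGt)

theorem luxNorm_eInv_sub_le_two_mul (hF : Measurable F) (hG : Measurable G) {a b : ℝ}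
    (ha0 : 0 ≤ a) (hb0 : 0 ≤ b) (ha : ∀ x, a ≤ F x) (hb : ⨅ x, G x ≤ b) {φ : ℝ≥0∞ → ℝ≥0∞}
    (hmono : Monotone φ) (hleft : ∀ x, ContinuousWithinAt φ (Iio x) x) :
    luxNorm φ (fun x => eInv (F x - (((a - b) / 2 : ℝ) : EReal))) ≤
      2 * luxNorm φ (fun x => eInv (infMaxE F G x)) := by
  have hsub0 (x : ES N) : 0 ≤ F x - (((a - b) / 2 : ℝ) : EReal) :=
    (EReal.coe_nonneg.2 (by positivity)).trans (half_add_le_sub b (ha x))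
  have hinf0 (x : ES N) : 0 ≤ infMaxE F G x :=
    le_iInf fun y => le_max_of_le_left ((EReal.coe_nonneg.2 ha0).trans (ha _))
  have hmeas : AEMeasurable fun x => eInv (infMaxE F G x) :=
    measurable_eInv.comp_aemeasurable (aemeasurable_infMaxE hF hG)
  calc luxNorm φ (fun x => eInv (F x - (((a - b) / 2 : ℝ) : EReal)))
      ≤ luxNorm φ (fun x => 2 * eInv (infMaxE F G x)) := by
        refine luxNorm_le_of_volume_lt_le hmono hleft
          (measurable_eInv.comp (hF.sub measurable_const)).aemeasurable (hmeas.const_mul 2)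
          fun s => ?_
        simp only [lt_eInv_iff (hsub0 _), lt_two_mul_eInv_iff (hinf0 _)]
        exact volume_sub_lt_le_volume_infMaxE_lt ha0 hb0 ha hb _
    _ ≤ 2 * luxNorm φ (fun x => eInv (infMaxE F G x)) :=
        luxNorm_const_mul_le φ _ two_ne_zero ENNReal.ofNat_ne_top

end InfMax

theorem luxNorm_inv_add_le_four_luxNorm_inv_infMax_general {f g : ES N → EReal}
    (hf : Measurable f) (hg : Measurable g) (hg0 : ∀ x, 0 ≤ g x) {a b : ℝ}
    (ha : (⨅ x, max (f x) 0) = (a : EReal)) (hb : (⨅ x, g x) = (b : EReal)) :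
    (∀ x, 0 ≤ max (f x) 0 - (((a - b) / 2 : ℝ) : EReal)) ∧
    (∀ x, 0 ≤ g x + (((a - b) / 2 : ℝ) : EReal)) ∧
    (∀ x, 0 ≤ infMaxE f g x) ∧
    AEMeasurable (infMaxE f g) (volume : Measure (ES N)) ∧
    ∀ φ : ℝ≥0∞ → ℝ≥0∞, Monotone φ → (∀ x, ContinuousWithinAt φ (Iio x) x) →
      luxNorm φ (fun x => eInv (max (f x) 0 - (((a - b) / 2 : ℝ) : EReal))) +
        luxNorm φ (fun x => eInv (g x + (((a - b) / 2 : ℝ) : EReal))) ≤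
      4 * luxNorm φ (fun x => eInv (infMaxE f g x)) := by
  have hfmax : Measurable fun x => max (f x) 0 := hf.max measurable_const
  have ha0 : 0 ≤ a := EReal.coe_nonneg.1 (ha ▸ le_iInf fun x => le_max_right _ _)
  have hb0 : 0 ≤ b := EReal.coe_nonneg.1 (hb ▸ le_iInf hg0)
  have haf (x : ES N) : a ≤ max (f x) 0 := ha ▸ iInf_le (fun x => max (f x) 0) x
  have hbg (x : ES N) : b ≤ g x := hb ▸ iInf_le g x
  have hadd (x : ES N) : g x + (((a - b) / 2 : ℝ) : EReal) = g x - (((b - a) / 2 : ℝ) : EReal) := by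
    rw [sub_eq_add_neg (g x), ← EReal.coe_neg, ← neg_div, neg_sub]
  simp only [hadd]
  refine ⟨fun x => (EReal.coe_nonneg.2 (by positivity)).trans (half_add_le_sub b (haf x)),
    fun x => (EReal.coe_nonneg.2 (by positivity)).trans (half_add_le_sub a (hbg x)),
    infMaxE_nonneg f hg0, aemeasurable_infMaxE hf hg, fun φ hmono hleft => ?_⟩
  have hnorm_f := luxNorm_eInv_sub_le_two_mul hfmax hg ha0 hb0 haf hb.le hmono hleft
  have hnorm_g := luxNorm_eInv_sub_le_two_mul hg hfmax hb0 ha0 hbg ha.le hmono hleft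
  rw [infMaxE_comm] at hnorm_g
  rw [infMaxE_max_zero_left f hg0] at hnorm_f hnorm_g
  exact (add_le_add hnorm_f hnorm_g).trans_eq (by rw [← add_mul]; norm_num)

theorem luxNorm_inv_add_le_four_luxNorm_inv_infMax {N : ℕ} (hN : 0 < N)
    (f g : ES N → EReal) (hf : Measurable f) (hg : Measurable g)
    (hg0 : ∀ x, 0 ≤ g x) (hfne : ∃ x, f x ≠ ⊤) (hgne : ∃ x, g x ≠ ⊤)
    (a b : ℝ) (ha : (⨅ x, max (f x) 0) = (a : EReal)) (hb : (⨅ x, g x) = (b : EReal)) :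
    (∀ x, 0 ≤ max (f x) 0 - (((a - b) / 2 : ℝ) : EReal)) ∧
    (∀ x, 0 ≤ g x + (((a - b) / 2 : ℝ) : EReal)) ∧
    (∀ x, 0 ≤ infMaxE f g x) ∧
    AEMeasurable (infMaxE f g) (volume : Measure (ES N)) ∧
    ∀ φ : ℝ≥0∞ → ℝ≥0∞, IsYoungFunction φ →
      luxNorm φ (fun x => eInv (max (f x) 0 - (((a - b) / 2 : ℝ) : EReal))) +
        luxNorm φ (fun x => eInv (g x + (((a - b) / 2 : ℝ) : EReal))) ≤
      4 * luxNorm φ (fun x => eInv (infMaxE f g x)) :=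
  let ⟨hF0, hG0, hinf0, hmeas, hnorm⟩ :=
    luxNorm_inv_add_le_four_luxNorm_inv_infMax_general hf hg hg0 ha hb
  ⟨hF0, hG0, hinf0, hmeas, fun φ hφ => hnorm φ hφ.mono hφ.left_continuous⟩

end
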